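/- arXiv:cs/0409015 — 2 statements merged into one kernel-verified Lean document; each statement's English description precedes it below -/
import Mathlib

section
/- Let p and q be distinct odd primes, let n = p·q, and let x, y : ZMod n satisfy y² = x². If the image of x − y in ZMod p is 0 but the image of x − y in ZMod q is nonzero, then Nat.gcd ((x − y).val) n = p. -/
section CastHomVal

variable {d n : ℕ} [NeZero n] (h : d ∣ n) (z : ZMod n)

lemma castHom_eq_zero_iff_dvd_val : ZMod.castHom h (ZMod d) z = 0 ↔ d ∣ z.val := by
  rw [ZMod.castHom_apply, ZMod.cast_eq_val, ZMod.natCast_eq_zero_iff]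

lemma isUnit_castHom_iff_coprime_val :
    IsUnit (ZMod.castHom h (ZMod d) z) ↔ z.val.Coprime d := by
  rw [ZMod.castHom_apply, ZMod.cast_eq_val, ZMod.isUnit_iff_coprime]

end CastHomVal

theorem gcd_recovers_factor_general {d m : ℕ} [NeZero (d * m)] {z : ZMod (d * m)}
    (hd : ZMod.castHom (dvd_mul_right d m) (ZMod d) z = 0)
    (hm : IsUnit (ZMod.castHom (dvd_mul_left m d) (ZMod m) z)) :
    Nat.gcd z.val (d * m) = d := by
  have hdvd : d ∣ z.val := (castHom_eq_zero_iff_dvd_val _ z).mp hd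
  have hcop : z.val.Coprime m := (isUnit_castHom_iff_coprime_val _ z).mp hm
  calc
    Nat.gcd z.val (d * m) = Nat.gcd z.val d := hcop.symm.gcd_mul_right_cancel_right d
    _ = d := Nat.gcd_eq_right hdvd

/-- If `y² = x²` modulo `n = p·q`, and `x − y ≡ 0 (mod p)` but `x − y ≢ 0 (mod q)`,
then `gcd(x − y, n) = p`. -/
theorem gcd_recovers_factor (p q : ℕ) (hp : p.Prime) (hq : q.Prime) (hpq : p ≠ q)
    (hpodd : Odd p) (hqodd : Odd q) (n : ℕ) (hn : n = p * q)
    (x y : ZMod n) (hsq : y ^ 2 = x ^ 2)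
    (h1 : ZMod.castHom (show p ∣ n from hn ▸ dvd_mul_right p q) (ZMod p) (x - y) = 0)
    (h2 : ZMod.castHom (show q ∣ n from hn ▸ dvd_mul_left q p) (ZMod q) (x - y) ≠ 0) :
    Nat.gcd (x - y).val n = p := by
  subst hn
  have : Fact q.Prime := ⟨hq⟩
  have : NeZero (p * q) := ⟨mul_ne_zero hp.ne_zero hq.ne_zero⟩
  exact gcd_recovers_factor_general h1 h2.isUnit
end

section
/- Let p and q be distinct odd primes, let n = p·q, and let x be a unit of ZMod n. Then the set { y : ZMod n | y² = x² and 1 < Nat.gcd ((x − y).val) n and Nat.gcd ((x − y).val) n < n } has exactly two elements; moreover for one of these two elements the gcd equals p and for the other it equals q. -/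
/-!
Modulo an odd prime power the only square roots of `x ^ 2`, for `x` a unit, are `x` and `-x`: the
ring is local and `(y + x) - (y - x) = 2 * x` is a unit, so one of the factors of
`(y - x) * (y + x) = 0` is a unit and the other one vanishes. By the Chinese remainder theorem the
square roots of `x ^ 2` modulo `m * n` are therefore `x`, `-x`, `w` and `-w`, where `w` is `x`
modulo `m` and `-x` modulo `n`. Now `x - w` is `0` modulo `m` and the unit `2 * x` modulo `n`, so
its gcd with `m * n` is `m`; likewise `x + w` gives `n`, while `x - x` and `x + x` give the trivial
factors `m * n` and `1`.
-/

theorem sq_eq_sq_iff_eq_or_eq_neg_of_isUnit_two {R : Type*} [CommRing R] [IsLocalRing R]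
    (h2 : IsUnit (2 : R)) {x y : R} (hx : IsUnit x) : y ^ 2 = x ^ 2 ↔ y = x ∨ y = -x := by
  refine ⟨fun hy ↦ ?_, by rintro (rfl | rfl) <;> ring⟩
  have hprod : (y + x) * (y - x) = 0 := by rw [← sq_sub_sq, hy, sub_self]
  have hsum : IsUnit ((y + x) + -(y - x)) := by
    convert h2.mul hx using 1
    ring
  rcases IsLocalRing.isUnit_or_isUnit_of_isUnit_add hsum with hadd | hsub
  · exact .inl (sub_eq_zero.mp (hadd.mul_right_eq_zero.mp hprod))
  · rw [IsUnit.neg_iff] at hsub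
    exact .inr (eq_neg_of_add_eq_zero_left (hsub.mul_left_eq_zero.mp hprod))

theorem isLocalRing_zmod_of_isPrimePow {n : ℕ} (hn : IsPrimePow n) : IsLocalRing (ZMod n) := by
  obtain ⟨p, k, hp, hk, rfl⟩ := (isPrimePow_nat_iff n).mp hn
  have : Fact p.Prime := ⟨hp⟩
  let f := ZMod.castHom (dvd_pow_self p hk.ne') (ZMod p)
  have : IsLocalHom f := by
    refine ⟨fun a ha ↦ ?_⟩
    obtain ⟨j, rfl⟩ := ZMod.natCast_zmod_surjective a
    rw [map_natCast, ZMod.isUnit_iff_coprime] at ha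
    exact (ZMod.isUnit_iff_coprime j _).mpr (ha.pow_right k)
  exact f.domain_isLocalRing

theorem isUnit_two_zmod_of_odd {n : ℕ} (hn : Odd n) : IsUnit (2 : ZMod n) :=
  mod_cast (ZMod.isUnit_iff_coprime 2 n).mpr (Nat.coprime_two_left.mpr hn)

theorem gcd_val_eq_one_of_isUnit {n : ℕ} {z : ZMod n} (hz : IsUnit z) : Nat.gcd z.val n = 1 := by
  obtain ⟨u, rfl⟩ := hz
  exact ZMod.val_coe_unit_coprime u

theorem gcd_val_sub_neg_self_eq_one {n : ℕ} (hn : Odd n) {x : ZMod n} (hx : IsUnit x) :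
    Nat.gcd (x - -x).val n = 1 := by
  rw [sub_neg_eq_add, ← two_mul]
  exact gcd_val_eq_one_of_isUnit ((isUnit_two_zmod_of_odd hn).mul hx)

/-- The square roots `y` of `x ^ 2` in `ZMod n` for which `gcd (x - y, n)` is a proper factor
of `n`. -/
def factoringRoots {n : ℕ} (x : ZMod n) : Set (ZMod n) :=
  {y | y ^ 2 = x ^ 2 ∧ 1 < Nat.gcd (x - y).val n ∧ Nat.gcd (x - y).val n < n}

section Coprime

variable {m n : ℕ} (h : m.Coprime n)

theorem gcd_val_eq_mul_gcd_val_chineseRemainder [NeZero (m * n)] (z : ZMod (m * n)) :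
    Nat.gcd z.val (m * n) =
      Nat.gcd (ZMod.chineseRemainder h z).1.val m *
        Nat.gcd (ZMod.chineseRemainder h z).2.val n := by
  obtain ⟨k, rfl⟩ := ZMod.natCast_zmod_surjective z
  simp only [map_natCast, Prod.fst_natCast, Prod.snd_natCast, ZMod.val_natCast, ← Nat.gcd_rec,
    h.mul_gcd]

/-- The square root of `x ^ 2` in `ZMod (m * n)` that is `x` modulo `m` and `-x` modulo `n`. The
opposite choice of signs is its negative, so it needs no definition of its own. -/
def mixedRoot (x : ZMod (m * n)) : ZMod (m * n) :=
  (ZMod.chineseRemainder h).symm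
    ((ZMod.chineseRemainder h x).1, -(ZMod.chineseRemainder h x).2)

theorem chineseRemainder_mixedRoot (x : ZMod (m * n)) :
    ZMod.chineseRemainder h (mixedRoot h x) =
      ((ZMod.chineseRemainder h x).1, -(ZMod.chineseRemainder h x).2) :=
  (ZMod.chineseRemainder h).apply_symm_apply _

theorem gcd_val_sub_mixedRoot [NeZero (m * n)] (hn : Odd n) {x : ZMod (m * n)} (hx : IsUnit x) :
    Nat.gcd (x - mixedRoot h x).val (m * n) = m := by
  have hx₂ := (Prod.isUnit_iff.mp (hx.map (ZMod.chineseRemainder h))).2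
  rw [gcd_val_eq_mul_gcd_val_chineseRemainder h, map_sub, chineseRemainder_mixedRoot,
    Prod.fst_sub, Prod.snd_sub, gcd_val_sub_neg_self_eq_one hn hx₂, sub_self, ZMod.val_zero,
    Nat.gcd_zero_left, mul_one]

theorem gcd_val_sub_neg_mixedRoot [NeZero (m * n)] (hm : Odd m) {x : ZMod (m * n)}
    (hx : IsUnit x) : Nat.gcd (x - -mixedRoot h x).val (m * n) = n := by
  have hx₁ := (Prod.isUnit_iff.mp (hx.map (ZMod.chineseRemainder h))).1
  rw [gcd_val_eq_mul_gcd_val_chineseRemainder h, map_sub, map_neg, chineseRemainder_mixedRoot,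
    Prod.fst_sub, Prod.snd_sub, Prod.fst_neg, Prod.snd_neg, gcd_val_sub_neg_self_eq_one hm hx₁,
    neg_neg, sub_self, ZMod.val_zero, Nat.gcd_zero_left, one_mul]

theorem sq_eq_sq_iff_eq_or_eq_neg_or_mixedRoot (hm : IsPrimePow m) (hn : IsPrimePow n)
    (hmodd : Odd m) (hnodd : Odd n) {x y : ZMod (m * n)} (hx : IsUnit x) :
    y ^ 2 = x ^ 2 ↔ (y = x ∨ y = -x) ∨ y = mixedRoot h x ∨ y = -mixedRoot h x := by
  have := isLocalRing_zmod_of_isPrimePow hm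
  have := isLocalRing_zmod_of_isPrimePow hn
  obtain ⟨hx₁, hx₂⟩ := Prod.isUnit_iff.mp (hx.map (ZMod.chineseRemainder h))
  simp only [← (ZMod.chineseRemainder h).injective.eq_iff, map_pow, map_neg,
    chineseRemainder_mixedRoot, Prod.ext_iff, Prod.fst_neg, Prod.snd_neg, Prod.pow_fst,
    Prod.pow_snd, neg_neg,
    sq_eq_sq_iff_eq_or_eq_neg_of_isUnit_two (isUnit_two_zmod_of_odd hmodd) hx₁,
    sq_eq_sq_iff_eq_or_eq_neg_of_isUnit_two (isUnit_two_zmod_of_odd hnodd) hx₂]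
  tauto

theorem factoringRoots_eq_pair (hm : IsPrimePow m) (hn : IsPrimePow n) (hmodd : Odd m)
    (hnodd : Odd n) {x : ZMod (m * n)} (hx : IsUnit x) :
    factoringRoots x = {mixedRoot h x, -mixedRoot h x} := by
  have : NeZero (m * n) := ⟨mul_ne_zero hm.ne_zero hn.ne_zero⟩
  have hm_lt : m < m * n := lt_mul_of_one_lt_right hm.pos hn.one_lt
  have hn_lt : n < m * n := lt_mul_of_one_lt_left hn.pos hm.one_lt
  ext y
  rw [factoringRoots, Set.mem_ofPred_eq, sq_eq_sq_iff_eq_or_eq_neg_or_mixedRoot h hm hn hmodd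
    hnodd hx, Set.mem_insert_iff, Set.mem_singleton_iff]
  constructor
  · rintro ⟨(rfl | rfl) | hy, hgt, hlt⟩
    · simp at hlt
    · exact absurd (gcd_val_sub_neg_self_eq_one (hmodd.mul hnodd) hx) hgt.ne'
    · exact hy
  · refine fun hy ↦ ⟨.inr hy, ?_⟩
    rcases hy with rfl | rfl
    · rw [gcd_val_sub_mixedRoot h hnodd hx]
      exact ⟨hm.one_lt, hm_lt⟩
    · rw [gcd_val_sub_neg_mixedRoot h hmodd hx]
      exact ⟨hn.one_lt, hn_lt⟩

end Coprime

theorem two_roots_give_factors_general (m n : ℕ) (hm : IsPrimePow m) (hn : IsPrimePow n)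
    (h : m.Coprime n) (hmodd : Odd m) (hnodd : Odd n) (x : ZMod (m * n)) (hx : IsUnit x) :
    (factoringRoots x).ncard = 2 ∧
      ∃ y₁ ∈ factoringRoots x, ∃ y₂ ∈ factoringRoots x,
        y₁ ≠ y₂ ∧ Nat.gcd (x - y₁).val (m * n) = m ∧ Nat.gcd (x - y₂).val (m * n) = n := by
  have : NeZero (m * n) := ⟨mul_ne_zero hm.ne_zero hn.ne_zero⟩
  have hgcd₁ := gcd_val_sub_mixedRoot h hnodd hx
  have hgcd₂ := gcd_val_sub_neg_mixedRoot h hmodd hx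
  have hmn : m ≠ n := by
    rintro rfl
    exact hm.ne_one ((Nat.coprime_self m).mp h)
  have hne : mixedRoot h x ≠ -mixedRoot h x := by
    intro heq
    rw [← heq] at hgcd₂
    exact hmn (hgcd₁.symm.trans hgcd₂)
  rw [factoringRoots_eq_pair h hm hn hmodd hnodd hx]
  exact ⟨Set.ncard_pair hne, _, Set.mem_insert _ _, _, Set.mem_insert_of_mem _ rfl, hne,
    hgcd₁, hgcd₂⟩

/-- Among the square roots `y` of `x²` modulo `n = p·q` (with `x` a unit),
exactly two yield a proper factor `gcd(x − y, n)` of `n`; for one of them the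
gcd is `p` and for the other it is `q`. -/
theorem two_roots_give_factors (p q : ℕ) (hp : p.Prime) (hq : q.Prime) (hpq : p ≠ q)
    (hpodd : Odd p) (hqodd : Odd q) (n : ℕ) (hn : n = p * q)
    (x : ZMod n) (hx : IsUnit x) :
    Set.ncard {y : ZMod n | y ^ 2 = x ^ 2 ∧ 1 < Nat.gcd (x - y).val n ∧
        Nat.gcd (x - y).val n < n} = 2 ∧
      ∃ y₁ ∈ {y : ZMod n | y ^ 2 = x ^ 2 ∧ 1 < Nat.gcd (x - y).val n ∧
          Nat.gcd (x - y).val n < n},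
        ∃ y₂ ∈ {y : ZMod n | y ^ 2 = x ^ 2 ∧ 1 < Nat.gcd (x - y).val n ∧
            Nat.gcd (x - y).val n < n},
          y₁ ≠ y₂ ∧ Nat.gcd (x - y₁).val n = p ∧ Nat.gcd (x - y₂).val n = q := by
  subst hn
  exact two_roots_give_factors_general p q hp.isPrimePow hq.isPrimePow
    ((Nat.coprime_primes hp hq).mpr hpq) hpodd hqodd x hx
end
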